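/- Let D₂ denote the diamond poset, the poset on four elements a, b, c, d with a < b, a < c, b < d, c < d, where b and c are incomparable. For every n, La#(n, D₂) ≤ 16 · C(n, ⌊n/2⌋); that is, every family of subsets of [n] containing no induced copy of D₂ has size at most 16 · C(n, ⌊n/2⌋). -/

import Mathlib

/-- The family `F` of subsets of `[n]` contains the poset `P` as an induced subposet. -/
def ContainsInduced (P : Type*) [PartialOrder P] {n : ℕ}
    (F : Finset (Finset (Fin n))) : Prop :=
  ∃ α : P → Finset (Fin n), Function.Injective α ∧ (∀ p, α p ∈ F) ∧
    ∀ x y : P, x < y ↔ α x ⊂ α y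

/-!
Average over all full chains of subsets of `V`, a full chain being encoded as a `Numbering V`, whose
members are the prefixes of the numbering. If a uniformly random full chain meets `F` in at most `k`
sets on average, then `#F ≤ k * n.choose (n / 2)` for `n = #V`, as in the proof of the LYM
inequality. For an induced-diamond-free `F` the average is at most `3`.

Sort the full chains meeting `F` by their smallest member `A` and largest member `D` in `F`. The
members of `F` strictly between `A` and `D` form a chain, so there are at most `#D - #A - 1` of
them. Each such `B` lies on at most a fraction `1 / ((#B - #A) * (#D - #B))` of the full chains in
the class of `(A, D)`, since swapping a point of `B \ A` with a point of `D \ B` keeps a full chain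
in its class and moves `B` to pairwise distinct sets. As `#D - #A - 1 ≤ (#B - #A) * (#D - #B)`,
together these `B` contribute at most `1` to the average over the class; `A` and `D` contribute at
most `1` each.
-/

open Equiv Finset Numbering

open scoped Nat

section Diamond

variable {X Y : Type*} [PartialOrder X] [PartialOrder Y]

/-- The elements `a, b, c, d` of a poset form an induced copy of the diamond `D₂`, with bottom `a`,
top `d` and incomparable middle elements `b, c`. -/
structure IsDiamond (a b c d : X) : Prop where
  bot_lt_left : a < b
  bot_lt_right : a < c
  left_lt_top : b < d
  right_lt_top : c < d
  incompRel : IncompRel (· ≤ ·) b c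

/-- A set of elements of a poset is induced-diamond-free if no four of its elements form an
induced copy of the diamond `D₂`. -/
def InducedDiamondFree (F : Set X) : Prop :=
  ∀ a ∈ F, ∀ b ∈ F, ∀ c ∈ F, ∀ d ∈ F, ¬ IsDiamond a b c d

lemma InducedDiamondFree.isChain_inter_Ioo {F : Set X} (hF : InducedDiamondFree F) {a d : X}
    (ha : a ∈ F) (hd : d ∈ F) : IsChain (· ≤ ·) (F ∩ Set.Ioo a d) := by
  rintro b ⟨hb, hab, hbd⟩ c ⟨hc, hac, hcd⟩ -
  by_contra! h
  exact hF a ha b hb c hc d hd ⟨hab, hac, hbd, hcd, h⟩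

lemma isDiamond_of_lt_iff {a b c d : X} (hbc : b ≠ c)
    (hlt : ∀ x y : X, x < y ↔
      (x = a ∧ y = b) ∨ (x = a ∧ y = c) ∨ (x = a ∧ y = d) ∨
        (x = b ∧ y = d) ∨ (x = c ∧ y = d)) :
    IsDiamond a b c d := by
  have hab : a < b := (hlt a b).2 (by simp)
  have hac : a < c := (hlt a c).2 (by simp)
  have hbd : b < d := (hlt b d).2 (by simp)
  have hcd : c < d := (hlt c d).2 (by simp)
  refine ⟨hab, hac, hbd, hcd, fun h => ?_, fun h => ?_⟩
  · simpa [hlt, hab.ne', hbc, hcd.ne] using h.lt_of_ne hbc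
  · simpa [hlt, hac.ne', hbc.symm, hbd.ne] using h.lt_of_ne hbc.symm

lemma IsDiamond.exists_orderEmbedding {a b c d : X} (h : IsDiamond a b c d)
    (hall : ∀ x : X, x = a ∨ x = b ∨ x = c ∨ x = d) {A B C D : Y} (h' : IsDiamond A B C D) :
    ∃ α : X ↪o Y, α a = A ∧ α b = B ∧ α c = C ∧ α d = D := by
  classical
  obtain ⟨hab, hac, hbd, hcd, hbc⟩ := h
  obtain ⟨hAB, hAC, hBD, hCD, hBC⟩ := h'
  let α (x : X) : Y := if x = a then A else if x = b then B else if x = c then C else D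
  have ha : α a = A := by simp [α]
  have hb : α b = B := by simp [α, hab.ne']
  have hc : α c = C := by simp [α, hac.ne', hbc.ne.symm]
  have hd : α d = D := by simp [α, (hab.trans hbd).ne', hbd.ne', hcd.ne']
  refine ⟨OrderEmbedding.ofMapLEIff α fun x y => ?_, ha, hb, hc, hd⟩
  rcases hall x with rfl | rfl | rfl | rfl <;> rcases hall y with rfl | rfl | rfl | rfl <;>
    simp [*, LT.lt.le, LT.lt.not_ge, hBC.not_le, hBC.not_ge, hbc.not_le, hbc.not_ge,
      (hab.trans hbd).le, (hab.trans hbd).not_ge, (hAB.trans hBD).le, (hAB.trans hBD).not_ge]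

lemma IsDiamond.containsInduced {n : ℕ} {F : Finset (Finset (Fin n))} {a b c d : X}
    (h : IsDiamond a b c d) (hall : ∀ x : X, x = a ∨ x = b ∨ x = c ∨ x = d)
    (hF : ¬ InducedDiamondFree (F : Set (Finset (Fin n)))) : ContainsInduced X F := by
  simp only [InducedDiamondFree, not_forall, not_not] at hF
  obtain ⟨A, hA, B, hB, C, hC, D, hD, h'⟩ := hF
  obtain ⟨α, rfl, rfl, rfl, rfl⟩ := h.exists_orderEmbedding hall h'
  refine ⟨α, α.injective, fun x => ?_, fun x y => α.lt_iff_lt.symm⟩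
  rcases hall x with rfl | rfl | rfl | rfl <;> assumption

end Diamond

lemma injOn_of_strictMono_of_isChain {X Y : Type*} [PartialOrder X] [Preorder Y] {g : X → Y}
    (hg : StrictMono g) {s : Set X} (hs : IsChain (· ≤ ·) s) : s.InjOn g := by
  intro x hx y hy hxy
  by_contra hne
  rcases hs hx hy hne with h | h
  · exact (hg (h.lt_of_ne hne)).ne hxy
  · exact (hg (h.lt_of_ne' hne)).ne' hxy

lemma sub_sub_one_le_sub_mul_sub {a b d : ℕ} (hab : a < b) (hbd : b < d) :
    d - a - 1 ≤ (b - a) * (d - b) := by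
  obtain ⟨p, rfl⟩ := Nat.exists_eq_add_of_lt hab
  obtain ⟨q, rfl⟩ := Nat.exists_eq_add_of_lt hbd
  calc a + p + 1 + q + 1 - a - 1 = p + q + 1 := by omega
    _ ≤ (p + 1) * (q + 1) := by nlinarith [Nat.zero_le (p * q)]
    _ = (a + p + 1 - a) * (a + p + 1 + q + 1 - (a + p + 1)) := by congr 1 <;> omega

section Finset

variable {V : Type*}

lemma card_le_of_isChain_of_subset_Ioo {S : Finset (Finset V)} {A D : Finset V}
    (hS : IsChain (· ≤ ·) (S : Set (Finset V))) (hAD : (S : Set (Finset V)) ⊆ Set.Ioo A D) :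
    #S ≤ #D - #A - 1 := by
  rw [← Nat.card_Ioo]
  have hinj := injOn_of_strictMono_of_isChain card_strictMono hS
  refine card_le_card_of_injOn card (fun B hB => ?_) hinj
  exact mem_coe.2 (mem_Ioo.2 ⟨card_lt_card (hAD hB).1, card_lt_card (hAD hB).2⟩)

variable [DecidableEq V]

lemma mem_map_swap {x y z : V} {C : Finset V} :
    z ∈ C.map (swap x y).toEmbedding ↔ swap x y z ∈ C := by
  rw [mem_map_equiv, symm_swap]

lemma map_swap_eq_self {x y : V} {C : Finset V} (h : x ∈ C ↔ y ∈ C) :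
    C.map (swap x y).toEmbedding = C := by
  ext z
  rw [mem_map_swap, swap_apply_def]
  split_ifs with hx hy
  · rw [hx, h]
  · rw [hy, h]
  · rfl

lemma injOn_map_swap (B : Finset V) :
    {p : V × V | p.1 ∈ B ∧ p.2 ∉ B}.InjOn fun p => B.map (swap p.1 p.2).toEmbedding := by
  rintro ⟨x, y⟩ ⟨hx, hy⟩ ⟨x', y'⟩ ⟨hx', hy'⟩ h
  have hiff (z : V) : swap x y z ∈ B ↔ swap x' y' z ∈ B := by
    simpa only [mem_map_swap] using Finset.ext_iff.1 h z
  simp only [Prod.mk.injEq]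
  constructor <;> by_contra hne
  · have hxy' : x ≠ y' := fun h => hy' (h ▸ hx)
    have hyx : y ∈ B ↔ x ∈ B := by
      simpa only [swap_apply_left, swap_apply_of_ne_of_ne hne hxy'] using hiff x
    exact hy (hyx.2 hx)
  · have hyx' : y ≠ x' := fun h => hy (h ▸ hx')
    have hxy : x ∈ B ↔ y ∈ B := by
      simpa only [swap_apply_right, swap_apply_of_ne_of_ne hyx' hne] using hiff y
    exact hy (hxy.1 hx)

end Finset

section Numbering

variable {V : Type*} [Fintype V]

lemma isPrefix_trans_iff {f : Numbering V} {π : Perm V} {C : Finset V} :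
    IsPrefix (π.trans f : Numbering V) C ↔ IsPrefix f (C.map π.toEmbedding) := by
  simp only [IsPrefix, card_map, mem_map_equiv, trans_apply]
  exact π.forall_congr fun x => by simp

lemma isPrefix_symm_trans_map {f : Numbering V} {C : Finset V} (hf : IsPrefix f C) (π : Perm V) :
    IsPrefix (π.symm.trans f : Numbering V) (C.map π.toEmbedding) := fun x => by
  simpa [mem_map_equiv] using hf (π.symm x)

lemma eq_of_isPrefix_of_card_eq {f : Numbering V} {s t : Finset V} (hs : IsPrefix f s)
    (ht : IsPrefix f t) (h : #s = #t) : s = t :=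
  (hs.subset_of_card_le_card ht h.le).antisymm (ht.subset_of_card_le_card hs h.ge)

lemma subset_or_subset_of_isPrefix {f : Numbering V} {s t : Finset V} (hs : IsPrefix f s)
    (ht : IsPrefix f t) : s ⊆ t ∨ t ⊆ s :=
  (Nat.le_total #s #t).imp (hs.subset_of_card_le_card ht) (ht.subset_of_card_le_card hs)

variable [DecidableEq V]

lemma card_mul_card_filter_isPrefix_le {ι : Type*} {T : Finset ι} {π : ι → Perm V}
    {K : Finset (Numbering V)} {B : Finset V}
    (hK : ∀ t ∈ T, ∀ f ∈ K, (π t).symm.trans f ∈ K)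
    (hinj : (T : Set ι).InjOn fun t => B.map (π t).toEmbedding) :
    #T * #{f ∈ K | IsPrefix f B} ≤ #K := by
  rw [← card_product]
  refine card_le_card_of_injOn (fun z => (π z.1).symm.trans z.2) ?_ ?_
  · rintro ⟨t, f⟩ h
    rw [mem_coe, mem_product, mem_filter] at h
    exact hK t h.1 f h.2.1
  · rintro ⟨t, f⟩ h ⟨t', f'⟩ h' heq
    rw [mem_coe, mem_product, mem_filter] at h h'
    have hf := isPrefix_symm_trans_map h.2.2 (π t)
    have hf' := isPrefix_symm_trans_map h'.2.2 (π t')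
    dsimp only at heq hf hf'
    rw [heq] at hf
    obtain rfl : t = t' := hinj h.1 h'.1 (eq_of_isPrefix_of_card_eq hf hf' (by simp))
    have hff' : f = f' := Equiv.ext fun x => by simpa using congr($heq (π t x))
    rw [hff']

lemma sum_card_filter_isPrefix_comm (K : Finset (Numbering V)) (F : Finset (Finset V)) :
    ∑ f ∈ K, #{B ∈ F | IsPrefix f B} = ∑ B ∈ F, #{f ∈ K | IsPrefix f B} :=
  sum_card_bipartiteAbove_eq_sum_card_bipartiteBelow IsPrefix

lemma card_le_mul_choose_of_sum_card_isPrefix_le {F : Finset (Finset V)} {k : ℕ}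
    (h : ∑ f : Numbering V, #{B ∈ F | IsPrefix f B} ≤ k * (Fintype.card V)!) :
    #F ≤ k * (Fintype.card V).choose (Fintype.card V / 2) := by
  set n := Fintype.card V
  refine Nat.le_of_mul_le_mul_right ?_ n.factorial_pos
  calc #F * n ! = ∑ B ∈ F, n.choose #B * #(prefixed B) := by
        rw [← smul_eq_mul, ← sum_const]
        refine sum_congr rfl fun B _ => ?_
        rw [card_prefixed, ← mul_assoc, Nat.choose_mul_factorial_mul_factorial (card_le_univ B)]
    _ ≤ ∑ B ∈ F, n.choose (n / 2) * #(prefixed B) := by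
        gcongr
        exact Nat.choose_le_middle _ _
    _ = n.choose (n / 2) * ∑ f : Numbering V, #{B ∈ F | IsPrefix f B} := by
        rw [← mul_sum, sum_card_filter_isPrefix_comm]
        rfl
    _ ≤ n.choose (n / 2) * (k * n !) := by gcongr
    _ = k * n.choose (n / 2) * n ! := by ring

end Numbering

section ChainsBetween

variable {V : Type*} [Fintype V] [DecidableEq V] {F : Finset (Finset V)} {A B D : Finset V}
  {f : Numbering V}

/-- The full chains (as numberings) that pass through `A` and `D` and all of whose members in `F`
lie between `A` and `D`. For `A, D ∈ F` this says that `A` and `D` are the smallest and the largest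
member of `F` on the chain. -/
def chainsBetween (F : Finset (Finset V)) (A D : Finset V) : Finset (Numbering V) :=
  {f | IsPrefix f A ∧ IsPrefix f D ∧ ∀ C ∈ F, IsPrefix f C → A ⊆ C ∧ C ⊆ D}

lemma mem_chainsBetween :
    f ∈ chainsBetween F A D ↔
      IsPrefix f A ∧ IsPrefix f D ∧ ∀ C ∈ F, IsPrefix f C → A ⊆ C ∧ C ⊆ D := by
  simp [chainsBetween]

lemma exists_mem_chainsBetween (hB : B ∈ F) (hf : IsPrefix f B) :
    ∃ A ∈ F, ∃ D ∈ F, f ∈ chainsBetween F A D := by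
  have hne : {C ∈ F | IsPrefix f C}.Nonempty := ⟨B, mem_filter.2 ⟨hB, hf⟩⟩
  obtain ⟨A, hA, hmin⟩ := exists_min_image _ card hne
  obtain ⟨D, hD, hmax⟩ := exists_max_image _ card hne
  simp only [mem_filter, and_imp] at hA hD hmin hmax
  refine ⟨A, hA.1, D, hD.1, mem_chainsBetween.2 ⟨hA.2, hD.2, fun C hC hfC => ⟨?_, ?_⟩⟩⟩
  · exact hA.2.subset_of_card_le_card hfC (hmin C hC hfC)
  · exact hfC.subset_of_card_le_card hD.2 (hmax C hC hfC)

lemma pairwiseDisjoint_chainsBetween (F : Finset (Finset V)) :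
    ((F ×ˢ F : Finset _) : Set (Finset V × Finset V)).PairwiseDisjoint
      fun z => chainsBetween F z.1 z.2 := by
  rintro ⟨A, D⟩ h ⟨A', D'⟩ h' hne
  rw [mem_coe, mem_product] at h h'
  refine disjoint_left.2 fun f hf hf' => hne ?_
  obtain ⟨hA, hD, hAD⟩ := mem_chainsBetween.1 hf
  obtain ⟨hA', hD', hAD'⟩ := mem_chainsBetween.1 hf'
  exact Prod.ext ((hAD A' h'.1 hA').1.antisymm (hAD' A h.1 hA).1)
    ((hAD' D h.2 hD).2.antisymm (hAD D' h'.2 hD').2)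

lemma swap_trans_mem_chainsBetween (hf : f ∈ chainsBetween F A D) {x y : V} (hx : x ∈ D \ A)
    (hy : y ∈ D \ A) : (swap x y).trans f ∈ chainsBetween F A D := by
  rw [mem_chainsBetween] at hf ⊢
  obtain ⟨hA, hD, hAD⟩ := hf
  rw [mem_sdiff] at hx hy
  have isPrefix_iff {C : Finset V} (h : x ∈ C ↔ y ∈ C) :
      IsPrefix ((swap x y).trans f : Numbering V) C ↔ IsPrefix f C := by
    rw [isPrefix_trans_iff, map_swap_eq_self h]
  have hA' := (isPrefix_iff (iff_of_false hx.2 hy.2)).2 hA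
  have hD' := (isPrefix_iff (iff_of_true hx.1 hy.1)).2 hD
  refine ⟨hA', hD', fun C hCF hfC => ⟨?_, ?_⟩⟩
  · refine (subset_or_subset_of_isPrefix hA' hfC).elim id fun hCA => ?_
    have hxy : x ∈ C ↔ y ∈ C := iff_of_false (fun h => hx.2 (hCA h)) (fun h => hy.2 (hCA h))
    exact (hAD C hCF ((isPrefix_iff hxy).1 hfC)).1
  · refine (subset_or_subset_of_isPrefix hfC hD').elim id fun hDC => ?_
    have hxy : x ∈ C ↔ y ∈ C := iff_of_true (hDC hx.1) (hDC hy.1)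
    exact (hAD C hCF ((isPrefix_iff hxy).1 hfC)).2

lemma mul_card_filter_chainsBetween_le (hAB : A ⊆ B) (hBD : B ⊆ D) :
    (#B - #A) * (#D - #B) * #{f ∈ chainsBetween F A D | IsPrefix f B} ≤
      #(chainsBetween F A D) := by
  rw [← card_sdiff_of_subset hAB, ← card_sdiff_of_subset hBD, ← card_product]
  refine card_mul_card_filter_isPrefix_le (π := fun p => swap p.1 p.2) ?_ ?_
  · rintro ⟨x, y⟩ h f hf
    rw [mem_product] at h
    exact swap_trans_mem_chainsBetween hf (sdiff_subset_sdiff hBD le_rfl h.1)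
      (sdiff_subset_sdiff le_rfl hAB h.2)
  · refine (injOn_map_swap B).mono fun p hp => ?_
    rw [mem_coe, mem_product, mem_sdiff, mem_sdiff] at hp
    exact ⟨hp.1.1, hp.2.2⟩

lemma sum_card_filter_chainsBetween_le_of_isChain
    (hF : IsChain (· ≤ ·) ((F : Set (Finset V)) ∩ Set.Ioo A D)) :
    ∑ B ∈ F with A ⊂ B ∧ B ⊂ D, #{f ∈ chainsBetween F A D | IsPrefix f B} ≤
      #(chainsBetween F A D) := by
  set S := {B ∈ F | A ⊂ B ∧ B ⊂ D}
  have hcard : #S ≤ #D - #A - 1 :=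
    card_le_of_isChain_of_subset_Ioo (hF.mono fun B hB => mem_filter.1 hB)
      fun B hB => (mem_filter.1 hB).2
  rcases S.eq_empty_or_nonempty with hS | hS
  · simp [hS]
  refine Nat.le_of_mul_le_mul_left ?_ (hS.card_pos.trans_le hcard)
  calc (#D - #A - 1) * ∑ B ∈ S, #{f ∈ chainsBetween F A D | IsPrefix f B}
      = ∑ B ∈ S, (#D - #A - 1) * #{f ∈ chainsBetween F A D | IsPrefix f B} := mul_sum ..
    _ ≤ ∑ _B ∈ S, #(chainsBetween F A D) := by
        refine sum_le_sum fun B hB => ?_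
        obtain ⟨-, hAB, hBD⟩ := mem_filter.1 hB
        have hsub := sub_sub_one_le_sub_mul_sub (card_lt_card hAB) (card_lt_card hBD)
        exact (Nat.mul_le_mul_right _ hsub).trans
          (mul_card_filter_chainsBetween_le hAB.subset hBD.subset)
    _ = #S * #(chainsBetween F A D) := by rw [sum_const, smul_eq_mul]
    _ ≤ (#D - #A - 1) * #(chainsBetween F A D) := Nat.mul_le_mul_right _ hcard

lemma sum_chainsBetween_card_isPrefix_le
    (hF : IsChain (· ≤ ·) ((F : Set (Finset V)) ∩ Set.Ioo A D)) :
    ∑ f ∈ chainsBetween F A D, #{B ∈ F | IsPrefix f B} ≤ 3 * #(chainsBetween F A D) := by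
  set K := chainsBetween F A D with hK
  have hends : ∑ B ∈ {A, D}, #{f ∈ K | IsPrefix f B} ≤ 2 * #K :=
    (sum_le_card_nsmul _ _ _ fun _ _ => card_filter_le K _).trans
      (Nat.mul_le_mul_right _ card_le_two)
  have hmiddle : ∑ B ∈ F with A ⊂ B ∧ B ⊂ D, #{f ∈ K | IsPrefix f B} ≤ #K :=
    sum_card_filter_chainsBetween_le_of_isChain hF
  have hdisj : Disjoint {A, D} {B ∈ F | A ⊂ B ∧ B ⊂ D} := by
    simp [disjoint_insert_left]
  calc ∑ f ∈ K, #{B ∈ F | IsPrefix f B}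
      = ∑ B ∈ F, #{f ∈ K | IsPrefix f B} := sum_card_filter_isPrefix_comm K F
    _ ≤ ∑ B ∈ {A, D} ∪ {B ∈ F | A ⊂ B ∧ B ⊂ D}, #{f ∈ K | IsPrefix f B} := by
        refine sum_le_sum_of_ne_zero fun B hB hne => ?_
        obtain ⟨f, hf⟩ := card_ne_zero.1 hne
        rw [mem_filter, hK, mem_chainsBetween] at hf
        obtain ⟨hAB, hBD⟩ := hf.1.2.2 B hB hf.2
        rcases eq_or_ne B A with rfl | hneA
        · simp
        rcases eq_or_ne B D with rfl | hneD
        · simp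
        simp [hB, hAB.ssubset_of_ne hneA.symm, hBD.ssubset_of_ne hneD]
    _ = ∑ B ∈ {A, D}, #{f ∈ K | IsPrefix f B} +
          ∑ B ∈ F with A ⊂ B ∧ B ⊂ D, #{f ∈ K | IsPrefix f B} := sum_union hdisj
    _ ≤ 3 * #K := by omega

lemma InducedDiamondFree.sum_card_isPrefix_le
    (hF : InducedDiamondFree (F : Set (Finset V))) :
    ∑ f : Numbering V, #{B ∈ F | IsPrefix f B} ≤ 3 * (Fintype.card V)! := by
  set U := (F ×ˢ F).biUnion fun z => chainsBetween F z.1 z.2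
  calc ∑ f : Numbering V, #{B ∈ F | IsPrefix f B}
      = ∑ f ∈ U, #{B ∈ F | IsPrefix f B} := by
        refine (sum_subset (subset_univ U) fun f _ hf => ?_).symm
        rw [card_eq_zero, filter_eq_empty_iff]
        intro B hB hfB
        obtain ⟨A, hA, D, hD, hfAD⟩ := exists_mem_chainsBetween hB hfB
        exact hf (mem_biUnion.2 ⟨(A, D), mem_product.2 ⟨hA, hD⟩, hfAD⟩)
    _ = ∑ z ∈ F ×ˢ F, ∑ f ∈ chainsBetween F z.1 z.2, #{B ∈ F | IsPrefix f B} :=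
        sum_biUnion (pairwiseDisjoint_chainsBetween F)
    _ ≤ ∑ z ∈ F ×ˢ F, 3 * #(chainsBetween F z.1 z.2) := by
        refine sum_le_sum fun z hz => sum_chainsBetween_card_isPrefix_le ?_
        exact hF.isChain_inter_Ioo (mem_product.1 hz).1 (mem_product.1 hz).2
    _ = 3 * #U := by
        rw [← mul_sum, card_biUnion (pairwiseDisjoint_chainsBetween F)]
    _ ≤ 3 * (Fintype.card V)! := by
        rw [← Fintype.card_numbering]
        exact Nat.mul_le_mul_left 3 (card_le_univ U)

end ChainsBetween

theorem stmt_14_general {V : Type*} [Fintype V] {F : Finset (Finset V)}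
    (hF : InducedDiamondFree (F : Set (Finset V))) :
    #F ≤ 3 * (Fintype.card V).choose (Fintype.card V / 2) := by
  classical exact card_le_mul_choose_of_sum_card_isPrefix_le hF.sum_card_isPrefix_le

/-- Let `D₂` be the diamond poset on four elements `a, b, c, d` with
`a < b, c < d` and `b, c` incomparable. Every family of subsets of `[n]` with no induced
copy of `D₂` has size at most `16·C(n, ⌊n/2⌋)`. -/
theorem stmt_14 (D : Type) [PartialOrder D] (a b c d : D)
    (hab : a ≠ b) (hac : a ≠ c) (had : a ≠ d) (hbc : b ≠ c) (hbd : b ≠ d) (hcd : c ≠ d)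
    (hall : ∀ x : D, x = a ∨ x = b ∨ x = c ∨ x = d)
    (hlt : ∀ x y : D, x < y ↔
      (x = a ∧ y = b) ∨ (x = a ∧ y = c) ∨ (x = a ∧ y = d) ∨
        (x = b ∧ y = d) ∨ (x = c ∧ y = d))
    (n : ℕ) (F : Finset (Finset (Fin n))) (hF : ¬ ContainsInduced D F) :
    F.card ≤ 16 * n.choose (n / 2) := by
  have hF' : InducedDiamondFree (F : Set (Finset (Fin n))) :=
    not_not.1 fun h => hF ((isDiamond_of_lt_iff hbc hlt).containsInduced hall h)
  simpa using (stmt_14_general hF').trans (Nat.mul_le_mul_right _ (by norm_num : 3 ≤ 16))
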